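/- Let p be a prime, let f_1(x), …, f_n(x) ∈ F_p[x] be an admissible set of polynomials with deg f_i = m_i, let t, A, B_1, …, B_n be positive integers, and write 𝓜_k = m_1 + ⋯ + m_k. If A − 1 + (B_1 m_1 + ⋯ + B_{n−1} m_{n−1} − 𝓜_{n−1}) t < p and t > A·B_1⋯B_{n−1} + 𝓜_n · (B_1⋯B_{n−1})²/2, then the polynomials x^a · f_1(x)^{b_1 t} ⋯ f_n(x)^{b_n t}, for all integers 0 ≤ a < A and 0 ≤ b_i < B_i (i = 1, …, n), are linearly independent over the field F_p. -/

import Mathlib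

open Polynomial

/-- A set of polynomials `f 0, …, f (n-1)` is admissible if there exist points
`x 0, …, x (n-1)` with `f i (x i) = 0`, `f j (x i) ≠ 0` for `j ≠ i`,
and `f i 0 ≠ 0` for all `i`. -/
def AdmissibleSet {n : ℕ} {K : Type*} [CommRing K] (f : Fin n → Polynomial K) : Prop :=
  ∃ x : Fin n → K, (∀ i, (f i).eval (x i) = 0) ∧
    (∀ i j, j ≠ i → (f j).eval (x i) ≠ 0) ∧ (∀ i, (f i).eval 0 ≠ 0)

/-!
List the products of powers of `f_1^t, …, f_{n-1}^t` as `U_1, …, U_N` and put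
`D = f_1 ⋯ f_{n-1}`, so that each `U_j` divides `D U_j'`. Let `y_j = g_j U_j` be linearly
independent, with `deg g_j < A`, and suppose that `P ^ t` divides their sum, for an irreducible `P`
prime to every `U_j`. The Wronskian `W` of the `y_j` is divisible by `P ^ (t - s + 1)`, where `s` is
the number of the `y_j`, and `D ^ (s choose 2) * W` is divisible by `∏ U_j`. As `deg W` is at most
`∑ deg y_j`, a large `t` forces `W = 0`. But `W = 0` says that a linear differential operator of
order less than `s` kills all the `y_j`, and the degrees of the polynomials it kills are roots of
its indicial polynomial at infinity, which has fewer than `s` roots. So the `U_j` are independent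
modulo `P ^ t`, and for `P ∣ f_n` this separates the powers of `f_n ^ t` one after another.
-/

section Determinants

variable {R ι : Type*} [CommRing R] [Fintype ι] [DecidableEq ι]

lemma prod_dvd_prod_mul_det {M : Matrix ι ι R} {a u : ι → R} (h : ∀ i j, u j ∣ a i * M i j) :
    ∏ j, u j ∣ (∏ i, a i) * M.det := by
  choose w hw using h
  refine ⟨(Matrix.of w).det, ?_⟩
  rw [← Matrix.det_mul_column, ← Matrix.det_mul_row]
  simp only [hw, Matrix.of_apply]

lemma dvd_det_of_dvd_sum_row [Nonempty ι] {M : Matrix ι ι R} {r : R}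
    (h : ∀ i, r ∣ ∑ j, M i j) : r ∣ M.det := by
  choose w hw using h
  obtain ⟨j⟩ := ‹Nonempty ι›
  refine ⟨(M.updateCol j w).det, ?_⟩
  have hcol : r • w = fun i => ∑ k, (1 : R) • M i k := by
    funext i
    simp only [Pi.smul_apply, smul_eq_mul, one_mul, ← hw]
  rw [← Matrix.det_updateCol_smul, hcol, Matrix.det_updateCol_sum M j fun _ => 1, one_smul]

lemma natDegree_det_le_sum {M : Matrix ι ι R[X]} {d : ι → ℕ}
    (h : ∀ i j, (M i j).natDegree ≤ d j) : M.det.natDegree ≤ ∑ j, d j := by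
  rw [Matrix.det_apply]
  refine natDegree_sum_le_of_forall_le _ _ fun σ _ => ?_
  calc (Equiv.Perm.sign σ • ∏ j, M (σ j) j).natDegree
      ≤ (∏ j, M (σ j) j).natDegree := natDegree_smul_le _ _
    _ ≤ ∑ j, (M (σ j) j).natDegree := natDegree_prod_le _ _
    _ ≤ ∑ j, d j := Finset.sum_le_sum fun j _ => h _ _

end Determinants

section LogarithmicDerivatives

variable {R : Type*} [CommRing R] {D U V y : R[X]}

lemma mul_dvd_mul_derivative_mul (hU : U ∣ D * derivative U) (hV : V ∣ D * derivative V) :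
    U * V ∣ D * derivative (U * V) := by
  rw [derivative_mul, mul_add, ← mul_assoc, mul_left_comm]
  exact dvd_add (mul_dvd_mul_right hU V) (mul_dvd_mul_left U hV)

lemma pow_dvd_mul_derivative_pow (hU : U ∣ D) (e : ℕ) : U ^ e ∣ D * derivative (U ^ e) :=
  match e with
  | 0 => by simp
  | e + 1 => by
    rw [derivative_pow_succ, pow_succ', mul_assoc, mul_left_comm]
    exact (mul_dvd_mul hU (dvd_mul_right _ _)).mul_left _

lemma prod_pow_dvd_prod_mul_derivative {ι : Type*} [Fintype ι] (f : ι → R[X]) (e : ι → ℕ) :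
    ∏ i, f i ^ e i ∣ (∏ i, f i) * derivative (∏ i, f i ^ e i) :=
  Finset.prod_induction _ (fun U => U ∣ (∏ i, f i) * derivative U)
    (fun _ _ => mul_dvd_mul_derivative_mul) (by simp) fun i hi =>
      pow_dvd_mul_derivative_pow (Finset.dvd_prod_of_mem f hi) _

lemma dvd_mul_derivative_of_dvd (hU : U ∣ D * derivative U) (hy : U ∣ y) :
    U ∣ D * derivative y := by
  obtain ⟨g, rfl⟩ := hy
  rw [derivative_mul, mul_add, ← mul_assoc, mul_left_comm]
  exact dvd_add (hU.mul_right g) (dvd_mul_right U _)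

lemma dvd_pow_mul_iterate_derivative (hU : U ∣ D * derivative U) (hy : U ∣ y) (k : ℕ) :
    U ∣ D ^ k * derivative^[k] y := by
  induction k with
  | zero => simpa using hy
  | succ k ih =>
    have hcorr : D ^ (k + 1) * derivative^[k + 1] y =
        D * derivative (D ^ k * derivative^[k] y) -
          (D * derivative (D ^ k)) * derivative^[k] y := by
      rw [Function.iterate_succ_apply', derivative_mul]
      ring
    obtain ⟨E, hE⟩ := pow_dvd_mul_derivative_pow (dvd_refl D) k
    rw [hcorr, hE, mul_right_comm]
    exact dvd_sub (dvd_mul_derivative_of_dvd hU ih) (ih.mul_right E)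

end LogarithmicDerivatives

section DifferentialOperators

/-- The linear differential operator `∑ k, q k * (d/dX)^k` of order less than `N`. -/
noncomputable def diffOp {R : Type*} [CommRing R] {N : ℕ} (q : Fin N → R[X]) : R[X] →ₗ[R] R[X] :=
  ∑ k, LinearMap.mulLeft R (q k) ∘ₗ derivative ^ (k : ℕ)

/-- The indicial polynomial at infinity of `diffOp q`, in the weight `s`: when no
`X ^ (N - k) * q k` has degree above `s`, its value at `d` is the coefficient of `X ^ (s + d)` in
`X ^ N * diffOp q (X ^ d)`. -/
noncomputable def indicialPoly {R : Type*} [CommRing R] {N : ℕ} (q : Fin N → R[X]) (s : ℕ) : R[X] :=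
  ∑ k : Fin N, (X ^ (N - (k : ℕ)) * q k).coeff s • descPochhammer R k

section CommRing

variable {R : Type*} [CommRing R] {N : ℕ}

lemma diffOp_apply (q : Fin N → R[X]) (v : R[X]) :
    diffOp q v = ∑ k : Fin N, q k * derivative^[k] v := by
  simp [diffOp, Module.End.pow_apply]

lemma coeff_X_pow_mul_iterate_derivative (v : R[X]) (k e : ℕ) :
    (X ^ k * derivative^[k] v).coeff e = e.descFactorial k * v.coeff e := by
  rw [coeff_X_pow_mul']
  split_ifs with h
  · rw [coeff_iterate_derivative, Nat.sub_add_cancel h, nsmul_eq_mul]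
  · rw [Nat.descFactorial_of_lt (not_le.1 h), Nat.cast_zero, zero_mul]

lemma coeff_X_pow_mul_diffOp {q : Fin N → R[X]} {s : ℕ}
    (hs : ∀ k : Fin N, (X ^ (N - (k : ℕ)) * q k).natDegree ≤ s) (v : R[X]) :
    (X ^ N * diffOp q v).coeff (s + v.natDegree) =
      (indicialPoly q s).eval (v.natDegree : R) * v.leadingCoeff := by
  have hsplit : X ^ N * diffOp q v =
      ∑ k : Fin N, (X ^ (N - (k : ℕ)) * q k) * (X ^ (k : ℕ) * derivative^[k] v) := by
    rw [diffOp_apply, Finset.mul_sum]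
    refine Finset.sum_congr rfl fun k _ => ?_
    rw [← pow_sub_mul_pow X k.is_le']
    ring
  have hdeg (k : ℕ) : (X ^ k * derivative^[k] v).natDegree ≤ v.natDegree := by
    rw [natDegree_le_iff_coeff_eq_zero]
    intro e he
    rw [coeff_X_pow_mul_iterate_derivative, coeff_eq_zero_of_natDegree_lt he, mul_zero]
  rw [hsplit, finsetSum_coeff, indicialPoly, eval_finsetSum, Finset.sum_mul]
  refine Finset.sum_congr rfl fun k _ => ?_
  rw [coeff_mul_add_eq_of_natDegree_le (hs k) (hdeg k), coeff_X_pow_mul_iterate_derivative,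
    eval_smul, descPochhammer_eval_eq_descFactorial, smul_eq_mul, coeff_natDegree, mul_assoc]

lemma exists_natDegree_le_and_coeff_ne_zero {ι : Type*} [Finite ι] {r : ι → R[X]} (hr : r ≠ 0) :
    ∃ s, (∀ k, (r k).natDegree ≤ s) ∧ ∃ k, (r k).coeff s ≠ 0 := by
  obtain ⟨k₀, hk₀⟩ := Function.ne_iff.1 hr
  have : Nonempty ι := ⟨k₀⟩
  obtain ⟨k₁, hmax⟩ := Finite.exists_max fun k => (r k).degree
  refine ⟨(r k₁).natDegree, fun k => natDegree_le_natDegree (hmax k), k₁, ?_⟩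
  rw [coeff_natDegree, leadingCoeff_ne_zero, ← degree_ne_bot]
  exact ne_bot_of_le_ne_bot (degree_ne_bot.2 hk₀) (hmax k₀)

variable [IsDomain R]

lemma natDegree_indicialPoly_lt (hN : 0 < N) (q : Fin N → R[X]) (s : ℕ) :
    (indicialPoly q s).natDegree < N := by
  refine Nat.lt_of_le_pred hN (natDegree_sum_le_of_forall_le _ _ fun k _ => ?_)
  refine (natDegree_smul_le _ _).trans ?_
  rw [descPochhammer_natDegree]
  exact Nat.le_pred_of_lt k.is_lt

lemma eval_natDegree_indicialPoly_eq_zero {q : Fin N → R[X]} {s : ℕ}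
    (hs : ∀ k : Fin N, (X ^ (N - (k : ℕ)) * q k).natDegree ≤ s) {v : R[X]} (hv : v ≠ 0)
    (hqv : diffOp q v = 0) : (indicialPoly q s).eval (v.natDegree : R) = 0 := by
  have h := coeff_X_pow_mul_diffOp hs v
  rw [hqv, mul_zero, coeff_zero] at h
  exact (mul_eq_zero.1 h.symm).resolve_right (leadingCoeff_ne_zero.2 hv)

end CommRing

section Field

variable {K : Type*} [Field K] {N d : ℕ}

lemma linearIndependent_descPochhammer : LinearIndependent K (descPochhammer K) :=
  Polynomial.Sequence.linearIndependent
    { elems' := descPochhammer K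
      degree_eq' := fun k => by
        rw [degree_eq_natDegree (monic_descPochhammer K k).ne_zero, descPochhammer_natDegree] }

lemma indicialPoly_ne_zero {q : Fin N → K[X]} {s : ℕ} {k : Fin N}
    (hk : (X ^ (N - (k : ℕ)) * q k).coeff s ≠ 0) : indicialPoly q s ≠ 0 := fun h =>
  hk (Fintype.linearIndependent_iff.1
    (linearIndependent_descPochhammer.comp _ Fin.val_injective) _ h k)

lemma finrank_le_card_of_natDegree_mem {V : Submodule K K[X]} {S : Finset ℕ}
    (h : ∀ v ∈ V, v ≠ 0 → v.natDegree ∈ S) : Module.finrank K V ≤ S.card := by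
  let coeffs : V →ₗ[K] S → K := LinearMap.pi fun e => lcoeff K e ∘ₗ V.subtype
  have hinj : Function.Injective coeffs := by
    rw [injective_iff_map_eq_zero]
    rintro ⟨v, hv⟩ hcoeffs
    by_contra hne
    have hv0 : v ≠ 0 := fun h => hne (Subtype.ext h)
    exact leadingCoeff_ne_zero.2 hv0 (congrFun hcoeffs ⟨v.natDegree, h v hv hv0⟩)
  simpa using LinearMap.finrank_le_finrank_of_injective hinj

lemma card_filter_eval_natCast_eq_zero_le [DecidableEq K] {Q : K[X]} (hQ : Q ≠ 0)
    (hd : Set.InjOn (Nat.cast : ℕ → K) (Set.Iio d)) :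
    ((Finset.range d).filter fun e : ℕ => Q.eval (e : K) = 0).card ≤ Q.natDegree := by
  refine (Finset.card_le_card_of_injOn (Nat.cast : ℕ → K) (fun e he => ?_)
    (hd.mono fun e he => ?_)).trans (Q.roots.toFinset_card_le.trans (card_roots' Q))
  · simpa [hQ] using (Finset.mem_filter.1 he).2
  · exact Finset.mem_range.1 (Finset.mem_filter.1 he).1

theorem finrank_lt_of_le_ker_diffOp {q : Fin N → K[X]} (hq : q ≠ 0) {V : Submodule K K[X]}
    (hVd : V ≤ degreeLT K d) (hVq : V ≤ LinearMap.ker (diffOp q))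
    (hd : Set.InjOn (Nat.cast : ℕ → K) (Set.Iio d)) : Module.finrank K V < N := by
  classical
  obtain ⟨k₀, hk₀⟩ := Function.ne_iff.1 hq
  obtain ⟨s, hs, k, hk⟩ := exists_natDegree_le_and_coeff_ne_zero
    (r := fun k : Fin N => X ^ (N - (k : ℕ)) * q k)
    (Function.ne_iff.2 ⟨k₀, mul_ne_zero (pow_ne_zero _ X_ne_zero) hk₀⟩)
  refine ((finrank_le_card_of_natDegree_mem fun v hv hv0 => ?_).trans
    (card_filter_eval_natCast_eq_zero_le (indicialPoly_ne_zero hk) hd)).trans_lt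
    (natDegree_indicialPoly_lt k₀.pos q s)
  rw [Finset.mem_filter, Finset.mem_range, natDegree_lt_iff_degree_lt hv0]
  exact ⟨mem_degreeLT.1 (hVd hv), eval_natDegree_indicialPoly_eq_zero hs hv0 (hVq hv)⟩

end Field

end DifferentialOperators

section Wronskian

/-- The Wronskian matrix of a family of polynomials: row `k` holds the `k`-th derivatives. -/
noncomputable def wronskianMatrix {R : Type*} [CommRing R] {s : ℕ} (y : Fin s → R[X]) :
    Matrix (Fin s) (Fin s) R[X] :=
  Matrix.of fun k j => derivative^[k] (y j)

section CommRing

variable {R : Type*} [CommRing R] {s : ℕ}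

lemma natDegree_det_wronskianMatrix_le (y : Fin s → R[X]) :
    (wronskianMatrix y).det.natDegree ≤ ∑ j, (y j).natDegree :=
  natDegree_det_le_sum fun k j => (natDegree_iterate_derivative (y j) k).trans (Nat.sub_le _ _)

lemma pow_dvd_det_wronskianMatrix (hs : 0 < s) {y : Fin s → R[X]} {P : R[X]} {t : ℕ}
    (h : P ^ t ∣ ∑ j, y j) : P ^ (t - (s - 1)) ∣ (wronskianMatrix y).det := by
  have : Nonempty (Fin s) := ⟨⟨0, hs⟩⟩
  refine dvd_det_of_dvd_sum_row fun k => ?_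
  simp only [wronskianMatrix, Matrix.of_apply, ← iterate_derivative_sum]
  exact (pow_dvd_pow P (by omega)).trans (pow_sub_dvd_iterate_derivative_of_pow_dvd k h)

lemma prod_dvd_pow_mul_det_wronskianMatrix {D : R[X]} {U y : Fin s → R[X]}
    (hU : ∀ j, U j ∣ D * derivative (U j)) (hy : ∀ j, U j ∣ y j) :
    ∏ j, U j ∣ D ^ s.choose 2 * (wronskianMatrix y).det := by
  have hpow : D ^ s.choose 2 = ∏ k : Fin s, D ^ (k : ℕ) := by
    rw [Finset.prod_pow_eq_pow_sum, Fin.sum_univ_eq_sum_range fun k => k, Finset.sum_range_id,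
      Nat.choose_two_right]
  rw [hpow]
  exact prod_dvd_prod_mul_det fun k j => dvd_pow_mul_iterate_derivative (hU j) (hy j) k

end CommRing

variable {K : Type*} [Field K] {s d : ℕ}

theorem det_wronskianMatrix_ne_zero {y : Fin s → K[X]} (hy : LinearIndependent K y)
    (hyd : ∀ j, y j ∈ degreeLT K d) (hd : Set.InjOn (Nat.cast : ℕ → K) (Set.Iio d)) :
    (wronskianMatrix y).det ≠ 0 := by
  intro hdet
  obtain ⟨q, hq, hqy⟩ := Matrix.exists_vecMul_eq_zero_iff.2 hdet
  have hker : Submodule.span K (Set.range y) ≤ LinearMap.ker (diffOp q) := by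
    rw [Submodule.span_le]
    rintro _ ⟨j, rfl⟩
    exact (diffOp_apply q (y j)).trans (congrFun hqy j)
  have hlt := finrank_lt_of_le_ker_diffOp hq
    (Submodule.span_le.2 (Set.range_subset_iff.2 hyd)) hker hd
  rw [finrank_span_eq_card hy, Fintype.card_fin] at hlt
  exact hlt.false

theorem lt_of_irreducible_pow_dvd_sum (hs : 0 < s) {A t : ℕ} {P D : K[X]} {U g : Fin s → K[X]}
    (hP : Irreducible P) (hD : D ≠ 0) (hU : ∀ j, U j ∣ D * derivative (U j))
    (hPU : ∀ j, ¬ P ∣ U j) (hg : ∀ j, (g j).natDegree < A)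
    (hli : LinearIndependent K fun j => U j * g j) (hUg : ∀ j, U j * g j ∈ degreeLT K d)
    (hd : Set.InjOn (Nat.cast : ℕ → K) (Set.Iio d)) (hdvd : P ^ t ∣ ∑ j, U j * g j) :
    t < A * s + D.natDegree * s.choose 2 := by
  set W := (wronskianMatrix fun j => U j * g j).det
  have hW0 : D ^ s.choose 2 * W ≠ 0 :=
    mul_ne_zero (pow_ne_zero _ hD) (det_wronskianMatrix_ne_zero hli hUg hd)
  have hU0 : ∏ j, U j ≠ 0 :=
    Finset.prod_ne_zero_iff.2 fun j _ h => hPU j (h ▸ dvd_zero P)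
  have hcop : IsCoprime (P ^ (t - (s - 1))) (∏ j, U j) :=
    IsCoprime.prod_right fun j _ => IsCoprime.pow_left (hP.coprime_iff_not_dvd.2 (hPU j))
  have hprod : P ^ (t - (s - 1)) * ∏ j, U j ∣ D ^ s.choose 2 * W :=
    hcop.mul_dvd ((pow_dvd_det_wronskianMatrix hs hdvd).mul_left _)
      (prod_dvd_pow_mul_det_wronskianMatrix hU fun j => dvd_mul_right _ _)
  have hdegW : W.natDegree ≤ (∏ j, U j).natDegree + ∑ j, (g j).natDegree := by
    rw [natDegree_prod _ _ (Finset.prod_ne_zero_iff.1 hU0), ← Finset.sum_add_distrib]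
    exact (natDegree_det_wronskianMatrix_le _).trans (Finset.sum_le_sum fun j _ => natDegree_mul_le)
  have hdeg : (t - (s - 1)) + (∏ j, U j).natDegree ≤
      s.choose 2 * D.natDegree + ((∏ j, U j).natDegree + ∑ j, (g j).natDegree) :=
    calc (t - (s - 1)) + (∏ j, U j).natDegree
        ≤ (t - (s - 1)) * P.natDegree + (∏ j, U j).natDegree :=
          Nat.add_le_add_right (Nat.le_mul_of_pos_right _ hP.natDegree_pos) _
      _ = (P ^ (t - (s - 1)) * ∏ j, U j).natDegree := by
          rw [natDegree_mul (pow_ne_zero _ hP.ne_zero) hU0, natDegree_pow]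
      _ ≤ (D ^ s.choose 2 * W).natDegree := natDegree_le_of_dvd hprod hW0
      _ ≤ s.choose 2 * D.natDegree + W.natDegree := by
          rw [← natDegree_pow]
          exact natDegree_mul_le
      _ ≤ _ := Nat.add_le_add_left hdegW _
  have hsum : (∑ j, (g j).natDegree) + s ≤ A * s := by
    have h := Finset.sum_le_sum fun j (_ : j ∈ Finset.univ) => Nat.succ_le_of_lt (hg j)
    simpa [Finset.sum_add_distrib, mul_comm] using h
  rw [mul_comm D.natDegree]
  omega

end Wronskian

section IndepModulo

variable {K ι κ : Type*} [Field K] [Fintype ι] [Fintype κ]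

/-- Independence of the polynomials `U j` modulo `P` over coefficients of degree less than `A`: no
combination `∑ j, U j * g j` with `deg g j < A`, other than the trivial one, is a multiple of `P`.
With `P = 0` this is linear independence of the `X ^ a * U j` for `a < A`. -/
def IndepModulo (P : K[X]) (A : ℕ) (U : ι → K[X]) : Prop :=
  ∀ g : ι → K[X], (∀ j, g j ∈ degreeLT K A) → P ∣ ∑ j, U j * g j → ∀ j, g j = 0

namespace IndepModulo

variable {P F : K[X]} {A : ℕ} {U : ι → K[X]}

lemma comp_equiv (e : κ ≃ ι) (h : IndepModulo P A (U ∘ e)) : IndepModulo P A U := by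
  intro g hg hdvd j
  rw [← Equiv.sum_comp e] at hdvd
  simpa using h (g ∘ e) (fun k => hg (e k)) hdvd (e.symm j)

lemma linearIndependent (h : IndepModulo 0 A U) :
    LinearIndependent K fun aj : Fin A × ι => X ^ (aj.1 : ℕ) * U aj.2 := by
  rw [Fintype.linearIndependent_iff]
  rintro c hc ⟨a, j⟩
  have hsum : ∑ j, U j * ∑ a : Fin A, monomial (a : ℕ) (c (a, j)) = 0 := by
    rw [← hc, Fintype.sum_prod_type_right]
    refine Finset.sum_congr rfl fun j _ => ?_
    rw [Finset.mul_sum]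
    refine Finset.sum_congr rfl fun a _ => ?_
    rw [← C_mul_X_pow_eq_monomial, smul_eq_C_mul]
    ring
  have hzero := h _ (fun j => Submodule.sum_mem _ fun a _ => monomial_coe_mem_degreeLT a _)
    (zero_dvd_iff.2 hsum) j
  simpa [finsetSum_coeff, coeff_monomial, Fin.val_inj] using congrArg (coeff · (a : ℕ)) hzero

lemma linearIndepOn (h : IndepModulo 0 A U) {g : ι → K[X]} (hg : ∀ j, g j ∈ degreeLT K A)
    {S : Finset ι} (hS : ∀ j, j ∈ S ↔ g j ≠ 0) : LinearIndepOn K (fun j => U j * g j) S := by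
  rw [linearIndepOn_finset_iff]
  intro c hc j hj
  have hsum : ∑ j, U j * c j • g j = 0 := by
    rw [← hc, ← Finset.sum_subset S.subset_univ fun j _ hj => by simp [not_not.1 ((hS j).not.1 hj)]]
    simp only [mul_smul_comm]
  have hcg := h _ (fun j => Submodule.smul_mem _ (c j) (hg j)) (zero_dvd_iff.2 hsum) j
  exact (smul_eq_zero.1 hcg).resolve_right ((hS j).1 hj)

lemma prod_powers (h : IndepModulo P A U) (hF : F ≠ 0) (hPF : P ∣ F) (B : ℕ) :
    IndepModulo 0 A fun bj : Fin B × ι => F ^ (bj.1 : ℕ) * U bj.2 := by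
  induction B with
  | zero => exact fun _ _ _ j => j.1.elim0
  | succ B ih =>
    intro g hg hsum
    have hsplit : ∑ bj : Fin (B + 1) × ι, F ^ (bj.1 : ℕ) * U bj.2 * g bj = ∑ j, U j * g (0, j) +
        F * ∑ bj : Fin B × ι, F ^ (bj.1 : ℕ) * U bj.2 * g (bj.1.succ, bj.2) := by
      simp only [Fintype.sum_prod_type, Fin.sum_univ_succ, Fin.val_zero, pow_zero, one_mul,
        Fin.val_succ, pow_succ', Finset.mul_sum, mul_assoc]
    rw [zero_dvd_iff, hsplit] at hsum
    have hlow : ∀ j, g (0, j) = 0 := by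
      refine h _ (fun j => hg _) ?_
      rw [eq_neg_of_add_eq_zero_left hsum, dvd_neg]
      exact hPF.mul_right _
    simp only [hlow, mul_zero, Finset.sum_const_zero, zero_add] at hsum
    have hhigh := ih (fun bj => g (bj.1.succ, bj.2)) (fun bj => hg _)
      (zero_dvd_iff.2 ((mul_eq_zero.1 hsum).resolve_left hF))
    rintro ⟨b, j⟩
    exact Fin.cases (hlow j) (fun b => hhigh (b, j)) b

end IndepModulo

lemma mul_mem_degreeLT {A d : ℕ} {U g : K[X]} (hg : g ∈ degreeLT K A)
    (hd : A + U.natDegree ≤ d) : U * g ∈ degreeLT K d := by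
  rcases eq_or_ne (U * g) 0 with h0 | h0
  · exact h0 ▸ zero_mem _
  have hgA := (natDegree_lt_iff_degree_lt (right_ne_zero_of_mul h0)).2 (mem_degreeLT.1 hg)
  rw [mem_degreeLT, ← natDegree_lt_iff_degree_lt h0]
  have := natDegree_mul_le (p := U) (q := g)
  omega

theorem IndepModulo.irreducible_pow {A t d : ℕ} {P D : K[X]} {U : ι → K[X]}
    (h : IndepModulo 0 A U) (hP : Irreducible P) (hD : D ≠ 0)
    (hU : ∀ j, U j ∣ D * derivative (U j)) (hPU : ∀ j, ¬ P ∣ U j)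
    (hUd : ∀ j, A + (U j).natDegree ≤ d) (hd : Set.InjOn (Nat.cast : ℕ → K) (Set.Iio d))
    (ht : A * Fintype.card ι + D.natDegree * (Fintype.card ι).choose 2 ≤ t) :
    IndepModulo (P ^ t) A U := by
  classical
  intro g hg hdvd
  by_contra! hne
  obtain ⟨j₀, hj₀⟩ := hne
  let S := Finset.univ.filter fun j => g j ≠ 0
  have hS (j : ι) : j ∈ S ↔ g j ≠ 0 := by simp [S]
  let e : Fin S.card ≃ S := S.equivFin.symm
  have hsum : ∑ k, U (e k) * g (e k) = ∑ j, U j * g j := by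
    rw [Equiv.sum_comp e fun j : S => U j * g j, Finset.sum_coe_sort S fun j => U j * g j]
    exact Finset.sum_subset S.subset_univ fun j _ hj => by
      rw [not_not.1 ((hS j).not.1 hj), mul_zero]
  have hlt : t < A * S.card + D.natDegree * S.card.choose 2 :=
    lt_of_irreducible_pow_dvd_sum (U := fun k => U (e k)) (g := fun k => g (e k))
      (Finset.card_pos.2 ⟨j₀, (hS j₀).2 hj₀⟩) hP hD (fun _ => hU _) (fun _ => hPU _)
      (fun k => (natDegree_lt_iff_degree_lt ((hS _).1 (e k).2)).2 (mem_degreeLT.1 (hg _)))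
      ((h.linearIndepOn hg hS).comp e e.injective)
      (fun _ => mul_mem_degreeLT (hg _) (hUd _)) hd (hsum ▸ hdvd)
  have hcard : S.card ≤ Fintype.card ι := S.card_le_univ
  refine hlt.not_ge (le_trans ?_ ht)
  gcongr

end IndepModulo

section ProductsOfPowers

variable {K : Type*} [Field K]

lemma natDegree_prod_pow_le {n : ℕ} (f : Fin n → K[X]) (t : ℕ) {B : Fin n → ℕ}
    (b : ∀ i, Fin (B i)) :
    (∏ i, f i ^ ((b i : ℕ) * t)).natDegree ≤ ∑ i, (B i - 1) * (f i).natDegree * t := by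
  refine (natDegree_prod_le _ _).trans (Finset.sum_le_sum fun i _ => natDegree_pow_le.trans ?_)
  rw [mul_right_comm]
  gcongr
  exact Nat.le_pred_of_lt (b i).is_lt

theorem IndepModulo.prod_pow_succ {n A t : ℕ} {f : Fin (n + 1) → K[X]} {P : K[X]}
    {B : Fin (n + 1) → ℕ} (hf : ∀ i, f i ≠ 0) (hP : Irreducible P) (hPf : P ∣ f (Fin.last n))
    (hPn : ∀ i : Fin n, ¬ P ∣ f i.castSucc)
    (hchar : Set.InjOn (Nat.cast : ℕ → K) (Set.Iio
      (A + ∑ i : Fin n, (B i.castSucc - 1) * (f i.castSucc).natDegree * t)))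
    (ht : A * (∏ i : Fin n, B i.castSucc) +
      (∑ i : Fin n, (f i.castSucc).natDegree) * (∏ i : Fin n, B i.castSucc).choose 2 ≤ t)
    (h : IndepModulo 0 A fun b : ∀ i : Fin n, Fin (B i.castSucc) =>
      ∏ i, f i.castSucc ^ ((b i : ℕ) * t)) :
    IndepModulo 0 A fun b : ∀ i, Fin (B i) => ∏ i, f i ^ ((b i : ℕ) * t) := by
  have hmod := h.irreducible_pow (t := t) hP (Finset.prod_ne_zero_iff.2 fun i _ => hf i.castSucc)
    (fun b => prod_pow_dvd_prod_mul_derivative _ _)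
    (fun b hdvd => by
      obtain ⟨i, -, hi⟩ := hP.prime.exists_mem_finset_dvd hdvd
      exact hPn i (hP.prime.dvd_of_dvd_pow hi))
    (fun b => Nat.add_le_add_left (natDegree_prod_pow_le _ t b) A) hchar
    (by
      rw [natDegree_prod _ _ fun i _ => hf i.castSucc]
      simpa using ht)
  refine IndepModulo.comp_equiv (Fin.snocEquiv fun i => Fin (B i)) ?_
  convert hmod.prod_powers (pow_ne_zero t (hf _)) (pow_dvd_pow_of_dvd hPf t) (B (Fin.last n))
    using 2 with c
  simp [Fin.prod_univ_castSucc, Fin.snocEquiv, mul_comm, pow_mul]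

lemma filter_val_lt_pred_eq_map_castSuccEmb (n : ℕ) :
    (Finset.univ.filter fun i : Fin (n + 1) => (i : ℕ) < n + 1 - 1) =
      Finset.univ.map Fin.castSuccEmb := by
  rw [← Fin.Iio_last_eq_map]
  ext i
  rw [Finset.mem_filter_univ, Finset.mem_Iio, Fin.lt_def, Fin.val_last, Nat.add_sub_cancel]

end ProductsOfPowers

lemma add_sum_le_of_int_lt {ι : Type*} {F : Finset ι} {B m : ι → ℕ} {A t p : ℕ}
    (hB : ∀ i, 0 < B i)
    (h : (A : ℤ) - 1 + ((∑ i ∈ F, (B i : ℤ) * m i) - ∑ i ∈ F, (m i : ℤ)) * t < p) :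
    A + ∑ i ∈ F, (B i - 1) * m i * t ≤ p := by
  have hcast : ((∑ i ∈ F, (B i - 1) * m i * t : ℕ) : ℤ) =
      ((∑ i ∈ F, (B i : ℤ) * m i) - ∑ i ∈ F, (m i : ℤ)) * t := by
    rw [← Finset.sum_sub_distrib, Finset.sum_mul]
    push_cast [Nat.cast_pred (hB _)]
    exact Finset.sum_congr rfl fun i _ => by ring
  omega

lemma mul_add_mul_choose_two_le_of_real_lt {A M M' N t : ℕ} (hM : M ≤ M')
    (h : (A : ℝ) * N + M' * (N : ℝ) ^ 2 / 2 < t) : A * N + M * N.choose 2 ≤ t := by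
  have hchoose : (N.choose 2 : ℝ) ≤ (N : ℝ) ^ 2 / 2 := by
    rw [Nat.cast_choose_two]
    nlinarith [Nat.cast_nonneg (α := ℝ) N]
  have hmul : (M : ℝ) * N.choose 2 ≤ M' * ((N : ℝ) ^ 2 / 2) := by gcongr
  have hle : (A : ℝ) * N + M * N.choose 2 ≤ t := by linarith
  exact_mod_cast hle

theorem products_linearIndependent_general {K : Type*} [Field K] {n A t : ℕ} {f P : Fin n → K[X]}
    {B : Fin n → ℕ} (hf : ∀ i, f i ≠ 0) (hP : ∀ i, Irreducible (P i)) (hPf : ∀ i, P i ∣ f i)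
    (hPndvd : ∀ i j, j < i → ¬ P i ∣ f j) (hB : ∀ i, 0 < B i)
    (hchar : Set.InjOn (Nat.cast : ℕ → K) (Set.Iio
      (A + ∑ i : Fin n with i.val < n - 1, (B i - 1) * (f i).natDegree * t)))
    (ht : A * (∏ i : Fin n with i.val < n - 1, B i) +
      (∑ i : Fin n with i.val < n - 1, (f i).natDegree) *
        (∏ i : Fin n with i.val < n - 1, B i).choose 2 ≤ t) :
    LinearIndependent K fun ab : Fin A × (∀ i, Fin (B i)) =>
      X ^ (ab.1 : ℕ) * ∏ i, f i ^ ((ab.2 i : ℕ) * t) := by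
  suffices h : IndepModulo 0 A fun b : ∀ i, Fin (B i) => ∏ i, f i ^ ((b i : ℕ) * t) from
    h.linearIndependent
  induction n with
  | zero =>
    intro g _ hsum b
    simpa [Subsingleton.elim b default] using hsum
  | succ n ih =>
    simp only [filter_val_lt_pred_eq_map_castSuccEmb, Finset.sum_map, Finset.prod_map,
      Fin.coe_castSuccEmb] at hchar ht
    refine IndepModulo.prod_pow_succ hf (hP _) (hPf _)
      (fun i => hPndvd _ _ (Fin.castSucc_lt_last i)) hchar ht ?_
    have hsub : (Finset.univ.filter fun i : Fin n => (i : ℕ) < n - 1) ⊆ Finset.univ :=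
      Finset.filter_subset _ _
    refine ih (f := fun i => f i.castSucc) (P := fun i => P i.castSucc)
      (B := fun i => B i.castSucc) (fun i => hf _) (fun i => hP _) (fun i => hPf _)
      (fun i j hji => hPndvd _ _ (Fin.castSucc_lt_castSucc_iff.2 hji)) (fun i => hB _)
      (hchar.mono (Set.Iio_subset_Iio ?_)) (le_trans ?_ ht)
    · exact Nat.add_le_add_left (Finset.sum_le_sum_of_subset hsub) A
    · have hprod := Finset.prod_le_prod_of_subset_of_one_le' hsub
        fun i _ _ => Nat.succ_le_of_lt (hB i.castSucc)
      have hsum := Finset.sum_le_sum_of_subset (f := fun i : Fin n => (f i.castSucc).natDegree) hsub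
      gcongr

/-- Linear independence of the products `x^a * f_1^{b_1 t} ⋯ f_n^{b_n t}`,
`a < A`, `b_i < B_i`, under the degree condition
`A - 1 + (∑_{i<n-1} B_i m_i − ∑_{i<n-1} m_i) t < p` and the condition
`t > A B_1 ⋯ B_{n-1} + (m_1 + ⋯ + m_n) (B_1 ⋯ B_{n-1})² / 2`. -/
theorem products_linearIndependent (p n : ℕ) [Fact p.Prime]
    (f : Fin n → Polynomial (ZMod p)) (m : Fin n → ℕ)
    (hdeg : ∀ i, (f i).natDegree = m i) (hadm : AdmissibleSet f)
    (t A : ℕ) (B : Fin n → ℕ) (ht : 0 < t) (hA : 0 < A) (hB : ∀ i, 0 < B i)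
    (h1 : (A : ℤ) - 1 +
        ((∑ i ∈ Finset.univ.filter (fun i : Fin n => (i : ℕ) < n - 1), (B i : ℤ) * (m i : ℤ)) -
          ∑ i ∈ Finset.univ.filter (fun i : Fin n => (i : ℕ) < n - 1), (m i : ℤ)) * (t : ℤ) < p)
    (h2 : (t : ℝ) >
        (A : ℝ) * (∏ i ∈ Finset.univ.filter (fun i : Fin n => (i : ℕ) < n - 1), (B i : ℝ)) +
          (∑ i, (m i : ℝ)) *
            (∏ i ∈ Finset.univ.filter (fun i : Fin n => (i : ℕ) < n - 1), (B i : ℝ)) ^ 2 / 2) :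
    LinearIndependent (ZMod p)
      (fun ab : Fin A × (∀ i : Fin n, Fin (B i)) =>
        (X : Polynomial (ZMod p)) ^ (ab.1 : ℕ) * ∏ i, (f i) ^ ((ab.2 i : ℕ) * t)) := by
  obtain ⟨x, hx, hne, hf0⟩ := hadm
  obtain rfl : (fun i => (f i).natDegree) = m := funext hdeg
  exact products_linearIndependent_general (P := fun i => X - C (x i))
    (fun i h => hf0 i (by rw [h, eval_zero])) (fun i => irreducible_X_sub_C _)
    (fun i => dvd_iff_isRoot.2 (hx i)) (fun i j hji => mt dvd_iff_isRoot.1 (hne i j hji.ne)) hB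
    ((CharP.natCast_injOn_Iio (ZMod p) p).mono (Set.Iio_subset_Iio (add_sum_le_of_int_lt hB h1)))
    (mul_add_mul_choose_two_le_of_real_lt
      (Finset.sum_le_sum_of_subset (Finset.filter_subset _ _)) (by exact_mod_cast h2))
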